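/- arXiv:2008.10205 — 9 statements merged into one kernel-verified Lean document; each statement's English description precedes it below -/
import Mathlib

section
/- Let μ be a family of probability measures on the discrete groupoid 𝒢 and let x be a unit. Suppose μ satisfies the Reiter condition at x: for every g ∈ 𝒢^x, lim_{n→∞} ‖g·μ^{*n,s(g)} − μ^{*n,x}‖₁ = 0. Then the tail boundary of the Markov operator P_μ^x is trivial: every bounded harmonic sequence (u_n)_{n≥1} for P_μ^x consists of constant functions on 𝒢^x, and u_n = u_{n+1} for all n. -/
open CategoryTheory

/-- The fiber `𝒢^x`: elements of the groupoid with range (target) `x`,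
encoded as pairs `⟨z, g⟩` with `g : z ⟶ x`; the source of such an element is `z`. -/
abbrev GpdFiber (Ω : Type*) [Groupoid Ω] (x : Ω) := Σ z : Ω, z ⟶ x

/-- The convolution `f * μ` of a function `f` on `𝒢^x` with a family of measures `μ`:
`(f*μ)(a) = ∑_{h : s(h)=s(a)} f(a h⁻¹) · μ^{r(h)}(h)`.  Here the product `g h` of groupoid
elements (defined when `s(g) = r(h)`) corresponds to the composite `h ≫ g` of morphisms. -/
noncomputable def convF {Ω : Type*} [Groupoid Ω] {x : Ω} (f : GpdFiber Ω x → ℝ)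
    (μ : ∀ y : Ω, GpdFiber Ω y → ℝ) : GpdFiber Ω x → ℝ :=
  fun a => ∑' p : Σ w : Ω, (a.1 ⟶ w), f ⟨p.1, Groupoid.inv p.2 ≫ a.2⟩ * μ p.1 ⟨a.1, p.2⟩

/-- A family of probability measures on a discrete groupoid: each `μ^x` is a nonnegative
function on `𝒢^x` with total sum `1`. -/
def IsProbFamily {Ω : Type*} [Groupoid Ω] (μ : ∀ y : Ω, GpdFiber Ω y → ℝ) : Prop :=
  (∀ (y : Ω) (p : GpdFiber Ω y), 0 ≤ μ y p) ∧ ∀ y : Ω, HasSum (μ y) 1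

/-- The Markov operator `P_μ^x` on bounded functions on `𝒢^x`:
`(P_μ^x f)(g) = ∑_{h ∈ 𝒢^{s(g)}} f(gh) · μ^{s(g)}(h)`. -/
noncomputable def markovOp {Ω : Type*} [Groupoid Ω] {x : Ω}
    (μ : ∀ y : Ω, GpdFiber Ω y → ℝ) (f : GpdFiber Ω x → ℝ) : GpdFiber Ω x → ℝ :=
  fun g => ∑' h : Σ w : Ω, (w ⟶ g.1), f ⟨h.1, h.2 ≫ g.2⟩ * μ g.1 ⟨h.1, h.2⟩

/-- The point mass `δ_g` at an element `g ∈ 𝒢^x`. -/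
noncomputable def diracF {Ω : Type*} [Groupoid Ω] {x : Ω} (g : GpdFiber Ω x) :
    GpdFiber Ω x → ℝ :=
  fun a => letI := Classical.propDecidable (a = g); if a = g then 1 else 0

/-- The translate `g·f` of a function `f` on `𝒢^x` by `g` with `s(g) = x`, `r(g) = y`:
`(g·f)(a) = f(g⁻¹ a)`. -/
def translateF {Ω : Type*} [Groupoid Ω] {x y : Ω} (g : x ⟶ y) (f : GpdFiber Ω x → ℝ) :
    GpdFiber Ω y → ℝ :=
  fun a => f ⟨a.1, a.2 ≫ Groupoid.inv g⟩

/-- The `n`-fold convolution power `μ^{*n}` of a family of measures (with `μ^{*0}` the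
family of point masses at the units, so that `μ^{*1} = μ`, `μ^{*(n+1)} = μ^{*n} * μ`). -/
noncomputable def convPow {Ω : Type*} [Groupoid Ω] (μ : ∀ y : Ω, GpdFiber Ω y → ℝ) :
    ℕ → ∀ y : Ω, GpdFiber Ω y → ℝ
  | 0 => fun y => diracF (⟨y, 𝟙 y⟩ : GpdFiber Ω y)
  | n + 1 => fun x => convF (convPow μ n x) μ

/-- The change of variables `(b,h) ↦ (bh, h)`. -/
def pairEquiv {Ω : Type*} [Groupoid Ω] (x : Ω) :
    (Σ b : GpdFiber Ω x, GpdFiber Ω b.1) ≃ (Σ a : GpdFiber Ω x, Σ w : Ω, (a.1 ⟶ w)) where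
  toFun q := ⟨⟨q.2.1, q.2.2 ≫ q.1.2⟩, ⟨q.1.1, q.2.2⟩⟩
  invFun q := ⟨⟨q.2.1, Groupoid.inv q.2.2 ≫ q.1.2⟩, ⟨q.1.1, q.2.2⟩⟩
  left_inv := by
    rintro ⟨⟨b, g⟩, ⟨c, h⟩⟩
    simp
  right_inv := by
    rintro ⟨⟨b, g⟩, ⟨c, h⟩⟩
    simp

lemma dual_aux {Ω : Type*} [Groupoid Ω] (μ : ∀ y : Ω, GpdFiber Ω y → ℝ) (hμ : IsProbFamily μ)
    {x : Ω} (f v : GpdFiber Ω x → ℝ) (hf : Summable f) (M : ℝ) (hv : ∀ a, |v a| ≤ M) :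
    (Summable fun a => v a * convF f μ a) ∧
      ∑' a, v a * convF f μ a = ∑' b, markovOp μ v b * f b := by
  have hS : Summable (fun q : Σ b : GpdFiber Ω x, GpdFiber Ω b.1 =>
      v ⟨q.2.1, q.2.2 ≫ q.1.2⟩ * (f q.1 * μ q.1.1 q.2)) := by
    have h0 : Summable (fun q : Σ b : GpdFiber Ω x, GpdFiber Ω b.1 =>
        M * (|f q.1| * μ q.1.1 q.2)) := by
      apply Summable.mul_left
      have hnn : ∀ q : (Σ b : GpdFiber Ω x, GpdFiber Ω b.1), 0 ≤ |f q.1| * μ q.1.1 q.2 :=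
        fun q => mul_nonneg (abs_nonneg (f q.1)) (hμ.1 q.1.1 q.2)
      refine (summable_sigma_of_nonneg hnn).2 ⟨fun b => ?_, ?_⟩
      · exact ((hμ.2 b.1).summable).mul_left (|f b|)
      · refine hf.abs.congr fun b => ?_
        have h1 : ∑' c : GpdFiber Ω b.1, |f b| * μ b.1 c = |f b| := by
          rw [tsum_mul_left, (hμ.2 b.1).tsum_eq, mul_one]
        exact h1.symm
    refine Summable.of_norm_bounded h0 fun q => ?_
    rw [Real.norm_eq_abs, abs_mul, abs_mul, abs_of_nonneg (hμ.1 _ _)]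
    exact mul_le_mul_of_nonneg_right (hv _) (mul_nonneg (abs_nonneg _) (hμ.1 _ _))
  have hS2 : Summable (fun q : Σ a : GpdFiber Ω x, Σ w : Ω, (a.1 ⟶ w) =>
      v q.1 * (f ⟨q.2.1, Groupoid.inv q.2.2 ≫ q.1.2⟩ * μ q.2.1 ⟨q.1.1, q.2.2⟩)) := by
    rw [← (pairEquiv x).summable_iff]
    refine hS.congr ?_
    rintro ⟨⟨b, g⟩, ⟨c, h⟩⟩
    simp [pairEquiv]
  have e : ∀ a, ∑' p : Σ w : Ω, (a.1 ⟶ w),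
      v a * (f ⟨p.1, Groupoid.inv p.2 ≫ a.2⟩ * μ p.1 ⟨a.1, p.2⟩) = v a * convF f μ a := by
    intro a
    rw [tsum_mul_left]; rfl
  refine ⟨hS2.sigma.congr fun a => e a, ?_⟩
  calc ∑' a, v a * convF f μ a = _ := tsum_congr fun a => (e a).symm
    _ = _ := hS2.tsum_sigma.symm
    _ = _ := ((pairEquiv x).tsum_eq _).symm
    _ = ∑' q : Σ b : GpdFiber Ω x, GpdFiber Ω b.1,
        v ⟨q.2.1, q.2.2 ≫ q.1.2⟩ * (f q.1 * μ q.1.1 q.2) := by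
      refine tsum_congr ?_
      rintro ⟨⟨b, g⟩, ⟨c, h⟩⟩
      simp [pairEquiv]
    _ = _ := hS.tsum_sigma
    _ = _ := by
      refine tsum_congr fun b => ?_
      unfold markovOp
      rw [← tsum_mul_right]
      exact tsum_congr fun h => by ring

lemma translate_conv {Ω : Type*} [Groupoid Ω] (μ : ∀ y : Ω, GpdFiber Ω y → ℝ)
    {x y : Ω} (g : y ⟶ x) (f : GpdFiber Ω y → ℝ) :
    translateF g (convF f μ) = convF (translateF g f) μ := by
  funext a
  simp [translateF, convF]

lemma translate_dirac {Ω : Type*} [Groupoid Ω] {x y : Ω} (g : y ⟶ x) :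
    translateF g (diracF (⟨y, 𝟙 y⟩ : GpdFiber Ω y)) = diracF ⟨y, g⟩ := by
  classical
  funext a
  obtain ⟨z, a⟩ := a
  have : ((⟨z, a ≫ Groupoid.inv g⟩ : GpdFiber Ω y) = ⟨y, 𝟙 y⟩) ↔
      ((⟨z, a⟩ : GpdFiber Ω x) = ⟨y, g⟩) := by
    constructor
    · intro h
      have := congrArg (fun q : GpdFiber Ω y => (⟨q.1, q.2 ≫ g⟩ : GpdFiber Ω x)) h
      simpa using this
    · intro h
      have := congrArg
        (fun q : GpdFiber Ω x => (⟨q.1, q.2 ≫ Groupoid.inv g⟩ : GpdFiber Ω y)) h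
      simpa using this
  simp only [translateF, diracF]
  by_cases h : (⟨z, a⟩ : GpdFiber Ω x) = ⟨y, g⟩
  · rw [if_pos h, if_pos (this.2 h)]
  · rw [if_neg h, if_neg (fun h' => h (this.1 h'))]

lemma translate_id {Ω : Type*} [Groupoid Ω] {x : Ω} (f : GpdFiber Ω x → ℝ) :
    translateF (𝟙 x) f = f := by
  funext a
  simp [translateF]

lemma harm_aux {Ω : Type*} [Groupoid Ω] (μ : ∀ y : Ω, GpdFiber Ω y → ℝ) (hμ : IsProbFamily μ)
    {x : Ω} (u : ℕ → GpdFiber Ω x → ℝ) (hu : ∀ n, 1 ≤ n → markovOp μ (u (n + 1)) = u n)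
    (M : ℝ) (hM : ∀ n, 1 ≤ n → ∀ a, |u n a| ≤ M) (g : GpdFiber Ω x) (k : ℕ) :
    Summable (translateF g.2 (convPow μ k g.1)) ∧ ∀ n, 1 ≤ n →
      ∑' a, u (n + k) a * translateF g.2 (convPow μ k g.1) a = u n g := by
  classical
  induction k with
  | zero =>
    simp only [convPow, translate_dirac]
    constructor
    · apply summable_of_hasFiniteSupport
      apply (Set.finite_singleton g).subset
      intro a ha
      by_contra h
      exact ha (by simp only [diracF]; exact if_neg h)
    · intro n hn
      rw [tsum_eq_single g]
      · simp [diracF]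
      · intro b hb
        have : diracF (⟨g.1, g.2⟩ : GpdFiber Ω x) b = 0 := by
          simp only [diracF]; exact if_neg hb
        rw [this, mul_zero]
  | succ k ih =>
    simp only [convPow, translate_conv]
    constructor
    · have := (dual_aux μ hμ _ (fun _ => 1) ih.1 1 (by simp)).1
      simpa using this
    · intro n hn
      rw [(dual_aux μ hμ _ (u (n + (k + 1))) ih.1 M (hM _ (by omega))).2,
        ← add_assoc, hu (n + k) (by omega)]
      exact ih.2 n hn

/-- if `μ` satisfies the Reiter condition at `x`, then the tail boundary of
`P_μ^x` is trivial: every bounded harmonic sequence consists of constant functions and is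
eventually constant in `n`. -/
theorem tail_boundary_trivial {Ω : Type*} [Groupoid Ω]
    [∀ x : Ω, Countable (GpdFiber Ω x)]
    (μ : ∀ y : Ω, GpdFiber Ω y → ℝ) (hμ : IsProbFamily μ) (x : Ω)
    (hReiter : ∀ g : GpdFiber Ω x,
      Filter.Tendsto
        (fun n => ∑' a, |translateF g.2 (convPow μ n g.1) a - convPow μ n x a|)
        Filter.atTop (nhds 0)) :
    ∀ u : ℕ → GpdFiber Ω x → ℝ,
      (∀ n, 1 ≤ n → markovOp μ (u (n + 1)) = u n) →
      (∃ M, ∀ n, 1 ≤ n → ∀ a, |u n a| ≤ M) →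
      ∀ n, 1 ≤ n → (∀ a b, u n a = u n b) ∧ u n = u (n + 1) := by
  intro u hu ⟨M, hM⟩
  have key : ∀ n, 1 ≤ n → ∀ g, u n g = u n ⟨x, 𝟙 x⟩ := by
    intro n hn g
    have hle : ∀ k, |u n g - u n ⟨x, 𝟙 x⟩| ≤
        M * ∑' a, |translateF g.2 (convPow μ k g.1) a - convPow μ k x a| := by
      intro k
      obtain ⟨s1, e1⟩ := harm_aux μ hμ u hu M hM g k
      obtain ⟨s2, e2⟩ := harm_aux μ hμ u hu M hM ⟨x, 𝟙 x⟩ k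
      simp only [translate_id] at s2 e2
      have hb := hM (n + k) (by omega)
      have sm : ∀ f : GpdFiber Ω x → ℝ, Summable f → Summable fun a => u (n + k) a * f a := by
        intro f hf
        refine Summable.of_norm_bounded (hf.abs.mul_left M) fun a => ?_
        rw [Real.norm_eq_abs, abs_mul]
        exact mul_le_mul_of_nonneg_right (hb a) (abs_nonneg _)
      rw [← e1 n hn, ← e2 n hn, ← (sm _ s1).tsum_sub (sm _ s2), ← tsum_mul_left,
        ← Real.norm_eq_abs]
      refine tsum_of_norm_bounded ((s1.sub s2).abs.mul_left M).hasSum fun a => ?_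
      rw [← mul_sub, Real.norm_eq_abs, abs_mul]
      exact mul_le_mul_of_nonneg_right (hb a) (abs_nonneg _)
    have hl := (hReiter g).const_mul M
    rw [mul_zero] at hl
    have h0 := ge_of_tendsto' hl hle
    exact sub_eq_zero.1 (abs_nonpos_iff.1 h0)
  intro n hn
  refine ⟨fun a b => by rw [key n hn a, key n hn b], ?_⟩
  rw [← hu n hn]
  funext g
  have : ∀ a, u (n + 1) a = u (n + 1) g := fun a => by
    rw [key _ (by omega) a, key _ (by omega) g]
  unfold markovOp
  simp only [this]
  rw [tsum_mul_left]
  have h1 := (hμ.2 g.1).tsum_eq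
  exact (congrArg (u (n + 1) g * ·) h1).trans (mul_one _)
end

section
/- Let c be a normalized 𝕋-valued 3-cocycle on the discrete groupoid 𝒢. For every composable pair (g,h) in 𝒢, every n ≥ 1, and every k ∈ 𝒢 with r(k)=r(g): u_g^n(k) ∘ u_h^n(g⁻¹k) = c(g,h,h⁻¹g⁻¹k) · (w^n(g,h)(k) ∘ u_{gh}^n(k)), as linear maps from complex-valued functions on 𝒢^{s(h),(n)}_{s(k)} to complex-valued functions on 𝒢^{r(g),(n)}_{s(k)}. -/
open CategoryTheory ComplexConjugate

universe u

/-- `Tup Ω n x y` is the set `𝒢^{x,(n+1)}_y` of composable `(n+1)`-tuples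
`(t₁, …, t_{n+1})` with `r(t₁) = x`, `s(t_i) = r(t_{i+1})` and `s(t_{n+1}) = y`
(morphism composition convention: the groupoid product `g h` is `h ≫ g`). -/
def Tup (Ω : Type u) [Groupoid.{u} Ω] : ℕ → Ω → Ω → Type u
  | 0, x, y => y ⟶ x
  | n + 1, x, y => Σ w : Ω, (w ⟶ x) × Tup Ω n w y

/-- The first entry `t₁` of a composable tuple, as an element of `𝒢^x`. -/
def Tup.head {Ω : Type u} [Groupoid.{u} Ω] : ∀ {n : ℕ} {x y : Ω}, Tup Ω n x y → Σ w : Ω, w ⟶ x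
  | 0, _, y, t => ⟨y, t⟩
  | _ + 1, _, _, t => ⟨t.1, t.2.1⟩

/-- The action `g𝒕 = (g t₁, t₂, …)` of `g` with `s(g) = r(t₁)` on composable tuples. -/
def Tup.act {Ω : Type u} [Groupoid.{u} Ω] :
    ∀ {n : ℕ} {x x' y : Ω}, (x ⟶ x') → Tup Ω n x y → Tup Ω n x' y
  | 0, _, _, _, g, t => t ≫ g
  | _ + 1, _, _, _, g, t => ⟨t.1, t.2.1 ≫ g, t.2.2⟩

/-- The range of the last entry of a composable tuple. -/
def Tup.last {Ω : Type u} [Groupoid.{u} Ω] : ∀ {n : ℕ} {x y : Ω}, Tup Ω n x y → Ω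
  | 0, x, _, _ => x
  | _ + 1, _, _, t => Tup.last t.2.2

/-- The last entry of a composable tuple. -/
def Tup.lastHom {Ω : Type u} [Groupoid.{u} Ω] : ∀ {n : ℕ} {x y : Ω} (t : Tup Ω n x y), y ⟶ t.last
  | 0, _, _, t => t
  | _ + 1, _, _, t => Tup.lastHom t.2.2

/-- A normalized `𝕋`-valued 3-cocycle on the discrete groupoid `Ω`:  `c g h k` is defined for
composable triples (`s(g) = r(h)`, `s(h) = r(k)`), has modulus one, satisfies the 3-cocycle
identity, and is `1` whenever one of the arguments is a unit. -/
structure GpdCocycle (Ω : Type u) [Groupoid.{u} Ω] where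
  c : ∀ {a b cc d : Ω}, (cc ⟶ d) → (b ⟶ cc) → (a ⟶ b) → ℂ
  abs_one : ∀ {a b cc d : Ω} (g : cc ⟶ d) (h : b ⟶ cc) (k : a ⟶ b), ‖c g h k‖ = 1
  identity : ∀ {a b cc d e : Ω} (g : d ⟶ e) (h : cc ⟶ d) (k : b ⟶ cc) (l : a ⟶ b),
    c g h k * conj (c g h (l ≫ k)) * c g (k ≫ h) l * conj (c (h ≫ g) k l) * c h k l = 1
  norm₁ : ∀ {a b cc : Ω} (h : b ⟶ cc) (k : a ⟶ b), c (𝟙 cc) h k = 1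
  norm₂ : ∀ {a b : Ω} {cc : Ω} (g : b ⟶ cc) (k : a ⟶ b), c g (𝟙 b) k = 1
  norm₃ : ∀ {a b cc : Ω} (g : b ⟶ cc) (h : a ⟶ b), c g h (𝟙 a) = 1

/-- The unitary `u_g^n(k)` (for `r(k') = r(g)`): it sends a function `ξ` on
`𝒢^{s(g),(n)}_z` to the function on `𝒢^{r(g),(n)}_z` with `(u_g^n(k)ξ)(g𝒕) =
c(g, t₁, t₁⁻¹g⁻¹k)·ξ(𝒕)`.  (The auxiliary element `k` may have any source.) -/
def uMap {Ω : Type u} [Groupoid.{u} Ω] (C : GpdCocycle Ω) {n : ℕ} {c d z z' : Ω}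
    (g : c ⟶ d) (k : z' ⟶ d) (ξ : Tup Ω n c z → ℂ) : Tup Ω n d z → ℂ :=
  fun s =>
    C.c g (Tup.head (Tup.act (Groupoid.inv g) s)).2
        (k ≫ Groupoid.inv g ≫ Groupoid.inv (Tup.head (Tup.act (Groupoid.inv g) s)).2) *
      ξ (Tup.act (Groupoid.inv g) s)

/-- The inverse of `u_g^n(k)`:  `((u_g^n(k))⁻¹ξ)(𝒕) = conj(c(g,t₁,t₁⁻¹g⁻¹k))·ξ(g𝒕)`. -/
def uMapInv {Ω : Type u} [Groupoid.{u} Ω] (C : GpdCocycle Ω) {n : ℕ} {c d z z' : Ω}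
    (g : c ⟶ d) (k : z' ⟶ d) (ξ : Tup Ω n d z → ℂ) : Tup Ω n c z → ℂ :=
  fun t =>
    conj (C.c g (Tup.head t).2 (k ≫ Groupoid.inv g ≫ Groupoid.inv (Tup.head t).2)) *
      ξ (Tup.act g t)

/-- The unitary `w^n(g,h)`: `(w^n(g,h)ξ)(𝒔) = conj(c(g,h,h⁻¹g⁻¹s₁))·ξ(𝒔)` on functions on
`𝒢^{r(g),(n)}_z`. -/
def wMap {Ω : Type u} [Groupoid.{u} Ω] (C : GpdCocycle Ω) {n : ℕ} {b c d z : Ω}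
    (g : c ⟶ d) (h : b ⟶ c) (ξ : Tup Ω n d z → ℂ) : Tup Ω n d z → ℂ :=
  fun s => conj (C.c g h ((Tup.head s).2 ≫ Groupoid.inv g ≫ Groupoid.inv h)) * ξ s

/-- The inverse of `w^n(g,h)`. -/
def wMapInv {Ω : Type u} [Groupoid.{u} Ω] (C : GpdCocycle Ω) {n : ℕ} {b c d z : Ω}
    (g : c ⟶ d) (h : b ⟶ c) (ξ : Tup Ω n d z → ℂ) : Tup Ω n d z → ℂ :=
  fun s => C.c g h ((Tup.head s).2 ≫ Groupoid.inv g ≫ Groupoid.inv h) * ξ s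

lemma core_identity {Ω : Type u} [Groupoid.{u} Ω] (C : GpdCocycle Ω)
    {a w b cc d : Ω} (g : cc ⟶ d) (h : b ⟶ cc) (p : w ⟶ b) (l : a ⟶ w) :
    C.c g (p ≫ h) l * C.c h p l =
      C.c g h (l ≫ p) * (conj (C.c g h p) * C.c (h ≫ g) p l) := by
  have key := C.identity g h p l
  have e : ∀ {a b cc d : Ω} (g : cc ⟶ d) (h : b ⟶ cc) (k : a ⟶ b),
      C.c g h k * conj (C.c g h k) = 1 := by
    intro a b cc d g h k
    rw [Complex.mul_conj, Complex.normSq_eq_norm_sq, C.abs_one]; simp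
  have e1 := e g h p
  have e2 := e g h (l ≫ p)
  have e3 := e (h ≫ g) p l
  generalize C.c g h p = A at *
  generalize C.c g h (l ≫ p) = B at *
  generalize C.c (h ≫ g) p l = D at *
  generalize C.c g (p ≫ h) l = X at *
  generalize C.c h p l = Y at *
  calc X * Y = (A * conj A) * (B * conj B) * (D * conj D) * (X * Y) := by
        rw [e1, e2, e3]; ring
    _ = (A * conj B * X * conj D * Y) * (B * (conj A * D)) := by ring
    _ = _ := by rw [key]; ring

lemma core_scalar {Ω : Type u} [Groupoid.{u} Ω] (C : GpdCocycle Ω)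
    {z w b cc d : Ω} (g : cc ⟶ d) (h : b ⟶ cc) (k : z ⟶ d) (s : w ⟶ d) :
    C.c g (s ≫ Groupoid.inv g) (k ≫ Groupoid.inv g ≫ Groupoid.inv (s ≫ Groupoid.inv g)) *
      C.c h ((s ≫ Groupoid.inv g) ≫ Groupoid.inv h)
        ((k ≫ Groupoid.inv g) ≫ Groupoid.inv h ≫
          Groupoid.inv ((s ≫ Groupoid.inv g) ≫ Groupoid.inv h)) =
    C.c g h (k ≫ Groupoid.inv g ≫ Groupoid.inv h) *
      (conj (C.c g h (s ≫ Groupoid.inv g ≫ Groupoid.inv h)) *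
        C.c (h ≫ g) (s ≫ Groupoid.inv (h ≫ g))
          (k ≫ Groupoid.inv (h ≫ g) ≫ Groupoid.inv (s ≫ Groupoid.inv (h ≫ g)))) := by
  have := core_identity C g h (s ≫ Groupoid.inv g ≫ Groupoid.inv h) (k ≫ Groupoid.inv s)
  simpa [Groupoid.inv_eq_inv] using this

/-- `u_g^n(k) ∘ u_h^n(g⁻¹k) = c(g,h,h⁻¹g⁻¹k) · (w^n(g,h)(k) ∘ u_{gh}^n(k))`
for every composable pair `(g,h)`, every `n ≥ 1` (here tuples of length `n = m + 1`), and
every `k` with `r(k) = r(g)`. -/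
theorem uMap_comp {Ω : Type u} [Groupoid.{u} Ω] (C : GpdCocycle Ω)
    {b cc d z : Ω} (g : cc ⟶ d) (h : b ⟶ cc) (k : z ⟶ d) (m : ℕ)
    (ξ : Tup Ω m b z → ℂ) (t : Tup Ω m d z) :
    uMap C g k (uMap C h (k ≫ Groupoid.inv g) ξ) t =
      C.c g h (k ≫ Groupoid.inv g ≫ Groupoid.inv h) *
        wMap C g h (uMap C (h ≫ g) k ξ) t := by
  have hact : Tup.act (Groupoid.inv h) (Tup.act (Groupoid.inv g) t) =
      Tup.act (Groupoid.inv (h ≫ g)) t := by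
    cases m
    · simp only [Tup.act, Groupoid.inv_eq_inv, IsIso.inv_comp]
      exact Category.assoc (Z := b) _ _ _
    · simp only [Tup.act, Groupoid.inv_eq_inv, IsIso.inv_comp, Category.assoc]
      rfl
  have hs := core_scalar C g h k (Tup.head t).2
  have key : ∀ x y p q r v : ℂ, x * y = p * (q * r) → x * (y * v) = p * (q * (r * v)) := by
    intro x y p q r v H
    linear_combination v * H
  have hx : ξ (Tup.act (Groupoid.inv h) (Tup.act (Groupoid.inv g) t)) =
      ξ (Tup.act (Groupoid.inv (h ≫ g)) t) := by rw [hact]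
  unfold uMap wMap
  beta_reduce
  rw [hx]
  apply key
  cases m <;> exact hs
end

section
/- Let c be a normalized 𝕋-valued 3-cocycle on the discrete groupoid 𝒢. For every n ≥ 1, every composable pair (k,l) in 𝒢, and every g with r(g)=r(k): c(g,g⁻¹k,l)·(I_{n+1}(k,l) ∘ (u_g^n(k)⊗1)) = u_g^{n+1}(kl) ∘ I_{n+1}(g⁻¹k,l), as linear maps from complex-valued functions on 𝒢^{s(g),(n+1)}_{s(l)} to complex-valued functions on 𝒢^{r(g),(n+1)}_{s(l)}. -/
open CategoryTheory ComplexConjugate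

universe u

/-- The unitary `I_{n+1}(k,l)` (for a composable pair `(k,l)`), acting on functions on
`𝒢^{r(k),(n+1)}_{s(l)}`:  `(I_{n+1}(k,l)ξ)(t₁,…,t_{n+1}) = conj(c(t₁,t₁⁻¹k,l))·ξ(t₁,…,t_n,l)`
if `t_{n+1} = l`, and `0` otherwise. -/
noncomputable def iMap {Ω : Type u} [Groupoid.{u} Ω] (C : GpdCocycle Ω) {m : ℕ} {a b d : Ω}
    (k : b ⟶ d) (l : a ⟶ b) (ξ : Tup Ω (m + 1) d a → ℂ) : Tup Ω (m + 1) d a → ℂ :=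
  fun t =>
    letI := Classical.propDecidable
      ((⟨Tup.last t, Tup.lastHom t⟩ : Σ w : Ω, a ⟶ w) = ⟨b, l⟩)
    if (⟨Tup.last t, Tup.lastHom t⟩ : Σ w : Ω, a ⟶ w) = ⟨b, l⟩ then
      conj (C.c (Tup.head t).2 (k ≫ Groupoid.inv (Tup.head t).2) l) * ξ t
    else 0

/-- `c(g,g⁻¹k,l)·(I_{n+1}(k,l) ∘ (u_g^n(k)⊗1)) = u_g^{n+1}(kl) ∘ I_{n+1}(g⁻¹k,l)`
for every `n ≥ 1` (tuples of length `n + 1 = m + 2`), every composable pair `(k,l)` and every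
`g` with `r(g) = r(k)`. -/
theorem iMap_uMap_comp {Ω : Type u} [Groupoid.{u} Ω] (C : GpdCocycle Ω)
    {a b cc d : Ω} (k : b ⟶ d) (l : a ⟶ b) (g : cc ⟶ d) (m : ℕ)
    (ξ : Tup Ω (m + 1) cc a → ℂ) (t : Tup Ω (m + 1) d a) :
    C.c g (k ≫ Groupoid.inv g) l * iMap C k l (uMap C g k ξ) t =
      uMap C g (l ≫ k) (iMap C (k ≫ Groupoid.inv g) l ξ) t := by
  obtain ⟨w, s, t⟩ := t
  obtain ⟨h, rfl⟩ : ∃ h : w ⟶ cc, s = h ≫ g := ⟨s ≫ Groupoid.inv g, by simp⟩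
  obtain ⟨p, rfl⟩ : ∃ p : b ⟶ w, k = p ≫ h ≫ g :=
    ⟨k ≫ Groupoid.inv g ≫ Groupoid.inv h, by simp⟩
  have e1 : (h ≫ g) ≫ Groupoid.inv g = h := by simp
  have e2 : (p ≫ h ≫ g) ≫ Groupoid.inv g = p ≫ h := by simp
  have e3 : (p ≫ h ≫ g) ≫ Groupoid.inv (h ≫ g) = p := by
    simp [Groupoid.inv_eq_inv]
  have e4 : (p ≫ h ≫ g) ≫ Groupoid.inv g ≫ Groupoid.inv h = p := by simp
  have e5 : (l ≫ p ≫ h ≫ g) ≫ Groupoid.inv g ≫ Groupoid.inv h = l ≫ p := by simp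
  have e6 : (p ≫ h) ≫ Groupoid.inv h = p := by simp
  have key := C.identity g h p l
  have n1 : C.c g h (l ≫ p) * conj (C.c g h (l ≫ p)) = 1 := by
    rw [Complex.mul_conj, Complex.normSq_eq_norm_sq, C.abs_one]; simp
  have n2 : C.c h p l * conj (C.c h p l) = 1 := by
    rw [Complex.mul_conj, Complex.normSq_eq_norm_sq, C.abs_one]; simp
  simp only [iMap, uMap, Tup.head, Tup.act, Tup.last, Tup.lastHom, e1, e2, e3, e4, e5, e6]
  by_cases hl : (⟨Tup.last t, Tup.lastHom t⟩ : Σ w : Ω, a ⟶ w) = ⟨b, l⟩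
  · refine (congrArg (C.c g (p ≫ h) l * ·) (if_pos hl)).trans
      (Eq.trans ?_ (congrArg (C.c g h (l ≫ p) * ·) (if_pos hl)).symm)
    beta_reduce
    generalize ξ ⟨w, (h, t)⟩ = x
    generalize conj (C.c g h (l ≫ p)) = A at *
    generalize conj (C.c h p l) = B at *
    linear_combination (C.c g h (l ≫ p) * B * x) * key -
      (C.c g (p ≫ h) l * conj (C.c (h ≫ g) p l) * C.c g h p * x) * n1 -
      (C.c g (p ≫ h) l * conj (C.c (h ≫ g) p l) * C.c g h p * x) *
        (C.c g h (l ≫ p) * A) * n2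
  · refine (congrArg (C.c g (p ≫ h) l * ·) (if_neg hl)).trans
      (Eq.trans ?_ (congrArg (C.c g h (l ≫ p) * ·) (if_neg hl)).symm)
    beta_reduce
    simp
end

section
/- Let c be a normalized 𝕋-valued 3-cocycle on the discrete groupoid 𝒢. For a composable pair (h,k), regard w^n(h,k) as the n-th level element over r(h) given by the family (w^n(h,k)(l'))_{l'∈𝒢^{r(h)}}. Then for every composable triple (g,h,k) in 𝒢, every n ≥ 1, and every l ∈ 𝒢^{r(g)}: α_g^n(w^n(h,k))(l) ∘ w^n(g,hk)(l) = c(g,h,k) · (w^n(g,h)(l) ∘ w^n(gh,k)(l)). -/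
open CategoryTheory ComplexConjugate

universe u

/-- The action `α_g^n` on `n`-th level elements: an `n`-th level element over a unit `x` is a
family `a = (a(k))_{k ∈ 𝒢^x}` of endomorphisms of functions on `𝒢^{x,(n)}_{s(k)}`, and
`α_g^n(a)(k) = u_g^n(k) ∘ a(g⁻¹k) ∘ (u_g^n(k))⁻¹`. -/
def alphaAct {Ω : Type u} [Groupoid.{u} Ω] (C : GpdCocycle Ω) {m : ℕ} {x x' : Ω} (g : x ⟶ x')
    (a : ∀ k : Σ z : Ω, z ⟶ x, (Tup Ω m x k.1 → ℂ) → (Tup Ω m x k.1 → ℂ)) :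
    ∀ k : Σ z : Ω, z ⟶ x', (Tup Ω m x' k.1 → ℂ) → (Tup Ω m x' k.1 → ℂ) :=
  fun k ξ => uMap C g k.2 (a ⟨k.1, k.2 ≫ Groupoid.inv g⟩ (uMapInv C g k.2 ξ))

theorem Tup.act_act_inv' {Ω : Type u} [Groupoid.{u} Ω] : ∀ {n : ℕ} {x x' y : Ω} (g : x ⟶ x')
    (t : Tup Ω n x' y), Tup.act g (Tup.act (Groupoid.inv g) t) = t
  | 0, x, x', y, g, t => by
    exact (show ∀ s : y ⟶ x', (s ≫ Groupoid.inv g) ≫ g = s from fun s => by simp) t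
  | n + 1, x, x', y, g, ⟨w, p, q⟩ => by
    exact congrArg (fun r : w ⟶ x' => (⟨w, r, q⟩ : Σ w : Ω, (w ⟶ x') × Tup Ω n w y))
      (show (p ≫ Groupoid.inv g) ≫ g = p by simp)

theorem Tup.head_act' {Ω : Type u} [Groupoid.{u} Ω] : ∀ {n : ℕ} {x x' y : Ω} (g : x ⟶ x')
    (t : Tup Ω n x y), Tup.head (Tup.act g t) = ⟨(Tup.head t).1, (Tup.head t).2 ≫ g⟩
  | 0, _, _, _, _, _ => rfl
  | _ + 1, _, _, _, _, _ => rfl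

theorem GpdCocycle.mul_conj' {Ω : Type u} [Groupoid.{u} Ω] (C : GpdCocycle Ω)
    {a b cc d : Ω} (g : cc ⟶ d) (h : b ⟶ cc) (k : a ⟶ b) :
    C.c g h k * conj (C.c g h k) = 1 := by
  rw [Complex.mul_conj, Complex.normSq_eq_norm_sq, C.abs_one]; simp

/-- regarding `w^n(h,k)` as the `n`-th level element
`(w^n(h,k)(l'))_{l' ∈ 𝒢^{r(h)}}` over `r(h)`, for every composable triple `(g,h,k)`, every
`n ≥ 1` (tuples of length `n = m + 1`) and every `l ∈ 𝒢^{r(g)}`: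
`α_g^n(w^n(h,k))(l) ∘ w^n(g,hk)(l) = c(g,h,k) · (w^n(g,h)(l) ∘ w^n(gh,k)(l))`. -/
theorem alphaAct_wMap {Ω : Type u} [Groupoid.{u} Ω] (C : GpdCocycle Ω) (m : ℕ)
    {a b cc d : Ω} (k : a ⟶ b) (h : b ⟶ cc) (g : cc ⟶ d)
    (l : Σ z : Ω, z ⟶ d) (ξ : Tup Ω m d l.1 → ℂ) (t : Tup Ω m d l.1) :
    alphaAct C g (fun _ ξ' => wMap C h k ξ') l (wMap C g (k ≫ h) ξ) t =
      C.c g h k * wMap C g h (wMap C (h ≫ g) k ξ) t := by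
  unfold alphaAct uMap uMapInv wMap
  beta_reduce
  rw [Tup.act_act_inv', Tup.head_act']
  obtain ⟨w, s⟩ := Tup.head t
  have e1 : s ≫ Groupoid.inv (h ≫ g) ≫ Groupoid.inv k =
      (s ≫ Groupoid.inv g) ≫ Groupoid.inv h ≫ Groupoid.inv k := by
    simp [Groupoid.inv_eq_inv]
  have e2 : s ≫ Groupoid.inv g ≫ Groupoid.inv (k ≫ h) =
      (s ≫ Groupoid.inv g) ≫ Groupoid.inv h ≫ Groupoid.inv k := by
    simp [Groupoid.inv_eq_inv]
  have e3 : s ≫ Groupoid.inv g ≫ Groupoid.inv h =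
      ((s ≫ Groupoid.inv g) ≫ Groupoid.inv h ≫ Groupoid.inv k) ≫ k := by
    simp [Groupoid.inv_eq_inv]
  dsimp only
  rw [e1, e2, e3]
  generalize (s ≫ Groupoid.inv g) ≫ Groupoid.inv h ≫ Groupoid.inv k = p
  have hu := C.mul_conj' g (s ≫ Groupoid.inv g)
    (l.2 ≫ Groupoid.inv g ≫ Groupoid.inv (s ≫ Groupoid.inv g))
  have hid := C.identity g h k p
  have h1 := C.mul_conj' g (k ≫ h) p
  have h2 := C.mul_conj' h k p
  generalize C.c g (s ≫ Groupoid.inv g)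
    (l.2 ≫ Groupoid.inv g ≫ Groupoid.inv (s ≫ Groupoid.inv g)) = U at *
  generalize C.c g (k ≫ h) p = A at *
  generalize C.c h k p = B at *
  generalize C.c g h k = X at *
  generalize C.c g h (p ≫ k) = Y at *
  generalize C.c (h ≫ g) k p = Z at *
  generalize conj U = U' at *
  generalize conj A = A' at *
  generalize conj B = B' at *
  generalize conj Y = Y' at *
  generalize conj Z = Z' at *
  have key : X * Y' * Z' = A' * B' := by
    linear_combination A' * B' * hid - X * Y' * Z' * (B * B') * h1 - X * Y' * Z' * h2
  linear_combination (A' * B' * ξ t) * hu - ξ t * key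
end

section
/- Let (α,w,c) be an outer action of the discrete groupoid 𝒢 on a family {M(x)} of unital C*-algebras. For every γ ∈ 𝒢 with y = r(γ) and all loops g,h at y (i.e. s(g)=r(g)=s(h)=r(h)=y): V(g,γ)·α_g(V(h,γ))·w(g,h)·V(gh,γ)* = ζ_γ(g,h)·α_γ(w(γ⁻¹gγ, γ⁻¹hγ)), where V(n,γ) = w(γ,γ⁻¹nγ)·w(n,γ)* and ζ_γ(g,h) = conj(c(g,h,γ))·c(g,γ,γ⁻¹hγ)·conj(c(γ,γ⁻¹gγ,γ⁻¹hγ)). -/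
open CategoryTheory ComplexConjugate

/-- An outer action `(α, w, c)` of a discrete groupoid on a family `M` of unital
C*-algebras indexed by the units: unital *-isomorphisms `α_g : M(s(g)) → M(r(g))`,
unitaries `w(g,h) ∈ M(r(g))` for composable pairs, and a modulus-one scalar `c(g,h,k)` for
composable triples, with `α_g ∘ α_h = Ad(w(g,h)) ∘ α_{gh}`,
`α_g(w(h,k))·w(g,hk) = c(g,h,k)·w(g,h)·w(gh,k)` and `w(g,h) = 1` when `g` or `h` is a unit.
(The groupoid product `g h` corresponds to the composite `h ≫ g` of morphisms.) -/
structure OuterAction (Ω : Type*) [Groupoid Ω] (M : Ω → Type*)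
    [∀ x, NormedRing (M x)] [∀ x, StarRing (M x)] [∀ x, CStarRing (M x)]
    [∀ x, NormedAlgebra ℂ (M x)] [∀ x, StarModule ℂ (M x)] where
  α : ∀ {a b : Ω}, (a ⟶ b) → (M a ≃⋆ₐ[ℂ] M b)
  w : ∀ {a b cc : Ω}, (b ⟶ cc) → (a ⟶ b) → M cc
  c : ∀ {a b cc d : Ω}, (cc ⟶ d) → (b ⟶ cc) → (a ⟶ b) → ℂ
  w_unitary : ∀ {a b cc : Ω} (g : b ⟶ cc) (h : a ⟶ b), w g h ∈ unitary (M cc)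
  c_abs : ∀ {a b cc d : Ω} (g : cc ⟶ d) (h : b ⟶ cc) (k : a ⟶ b), ‖c g h k‖ = 1
  α_comp : ∀ {a b cc : Ω} (g : b ⟶ cc) (h : a ⟶ b) (m : M a),
    α g (α h m) = w g h * α (h ≫ g) m * star (w g h)
  w_cocycle : ∀ {a b cc d : Ω} (g : cc ⟶ d) (h : b ⟶ cc) (k : a ⟶ b),
    α g (w h k) * w g (k ≫ h) = c g h k • (w g h * w (h ≫ g) k)
  w_unit_left : ∀ {a b : Ω} (h : a ⟶ b), w (𝟙 b) h = 1
  w_unit_right : ∀ {a b : Ω} (g : a ⟶ b), w g (𝟙 a) = 1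

/-- The unitary `V(n,g) = w(g, g⁻¹ng) · w(n,g)*` for a loop `n` at `r(g)`. -/
def OuterAction.V {Ω : Type*} [Groupoid Ω] {M : Ω → Type*}
    [∀ x, NormedRing (M x)] [∀ x, StarRing (M x)] [∀ x, CStarRing (M x)]
    [∀ x, NormedAlgebra ℂ (M x)] [∀ x, StarModule ℂ (M x)]
    (A : OuterAction Ω M) {a b : Ω} (n : b ⟶ b) (g : a ⟶ b) : M b :=
  A.w g (g ≫ n ≫ Groupoid.inv g) * star (A.w n g)

theorem V_conj_mul {z : ℂ} (hz : ‖z‖ = 1) : conj z * z = 1 := by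
  rw [Complex.conj_mul', hz]; simp

/-- for `γ` with `y = r(γ)` and loops `g, h` at `y`:
`V(g,γ)·α_g(V(h,γ))·w(g,h)·V(gh,γ)* = ζ_γ(g,h)·α_γ(w(γ⁻¹gγ, γ⁻¹hγ))` with
`ζ_γ(g,h) = conj(c(g,h,γ))·c(g,γ,γ⁻¹hγ)·conj(c(γ,γ⁻¹gγ,γ⁻¹hγ))`. -/
theorem outerAction_V_cocycle {Ω : Type*} [Groupoid Ω] {M : Ω → Type*}
    [∀ x, NormedRing (M x)] [∀ x, StarRing (M x)] [∀ x, CStarRing (M x)]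
    [∀ x, NormedAlgebra ℂ (M x)] [∀ x, StarModule ℂ (M x)]
    (A : OuterAction Ω M) {x y : Ω} (γ : x ⟶ y) (g h : y ⟶ y) :
    A.V g γ * A.α g (A.V h γ) * A.w g h * star (A.V (h ≫ g) γ) =
      (conj (A.c g h γ) * A.c g γ (γ ≫ h ≫ Groupoid.inv γ) *
          conj (A.c γ (γ ≫ g ≫ Groupoid.inv γ) (γ ≫ h ≫ Groupoid.inv γ))) •
        A.α γ (A.w (γ ≫ g ≫ Groupoid.inv γ) (γ ≫ h ≫ Groupoid.inv γ)) := by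
  obtain ⟨p, hp⟩ : ∃ p, p = γ ≫ g ≫ Groupoid.inv γ := ⟨_, rfl⟩
  obtain ⟨q, hq⟩ : ∃ q, q = γ ≫ h ≫ Groupoid.inv γ := ⟨_, rfl⟩
  have hpq : γ ≫ (h ≫ g) ≫ Groupoid.inv γ = q ≫ p := by simp [hp, hq]
  have hpγ : p ≫ γ = γ ≫ g := by simp [hp]
  have hqγ : q ≫ γ = γ ≫ h := by simp [hq]
  unfold OuterAction.V
  rw [hpq, ← hp, ← hq]
  have e1 := A.w_cocycle g h γ
  have e2 := A.w_cocycle g γ q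
  have e3 := A.w_cocycle γ p q
  rw [hqγ] at e2
  rw [hpγ] at e3
  have n1 := V_conj_mul (A.c_abs g h γ)
  have n3 := V_conj_mul (A.c_abs γ p q)
  have f1 : A.w g h * A.w (h ≫ g) γ =
      conj (A.c g h γ) • (A.α g (A.w h γ) * A.w g (γ ≫ h)) := by
    rw [e1, smul_smul, n1, one_smul]
  have f3 : A.w γ p * A.w (γ ≫ g) q =
      conj (A.c γ p q) • (A.α γ (A.w p q) * A.w γ (q ≫ p)) := by
    rw [e3, smul_smul, n3, one_smul]
  have u1 : star (A.α g (A.w h γ)) * A.α g (A.w h γ) = 1 := by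
    rw [← map_star, ← map_mul, (Unitary.mem_iff.1 (A.w_unitary h γ)).1, map_one]
  have u2 : star (A.w g γ) * A.w g γ = 1 := (Unitary.mem_iff.1 (A.w_unitary g γ)).1
  have u3 : A.w γ (q ≫ p) * star (A.w γ (q ≫ p)) = 1 :=
    (Unitary.mem_iff.1 (A.w_unitary γ (q ≫ p))).2
  rw [map_mul, map_star, star_mul, star_star]
  calc _ = A.w γ p * star (A.w g γ) * A.α g (A.w γ q) * star (A.α g (A.w h γ)) *
        (A.w g h * A.w (h ≫ g) γ) * star (A.w γ (q ≫ p)) := by simp only [mul_assoc]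
    _ = conj (A.c g h γ) • (A.w γ p * star (A.w g γ) * A.α g (A.w γ q) *
        (star (A.α g (A.w h γ)) * A.α g (A.w h γ)) * A.w g (γ ≫ h) *
          star (A.w γ (q ≫ p))) := by
        rw [f1]; simp only [mul_assoc, mul_smul_comm, smul_mul_assoc]
    _ = conj (A.c g h γ) • (A.w γ p * star (A.w g γ) * (A.α g (A.w γ q) * A.w g (γ ≫ h)) *
          star (A.w γ (q ≫ p))) := by
        rw [u1, mul_one]; simp only [mul_assoc]
    _ = (conj (A.c g h γ) * A.c g γ q) • (A.w γ p * (star (A.w g γ) * A.w g γ) *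
          A.w (γ ≫ g) q * star (A.w γ (q ≫ p))) := by
        rw [e2]; simp only [mul_assoc, mul_smul_comm, smul_mul_assoc, smul_smul]
    _ = _ := by
        rw [u2, mul_one, f3, smul_mul_assoc, mul_assoc (A.α γ (A.w p q)), u3, mul_one, smul_smul]
end

section
/- In the setting of an outer action (α,w,c) of a discrete groupoid 𝒢 with a normal isotropy subgroupoid 𝒩 and characteristic data (ũ,λ,μ) as in the context, the relation (CC3) holds: for every unit x and all l,m,n ∈ 𝒩_x, μ(l,m)·μ(lm,n) = c(l,m,n)·μ(m,n)·μ(l,mn), as an equality of central unitaries in M(x). -/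
open CategoryTheory ComplexConjugate

/-- `N` is a normal subgroupoid of the isotropy bundle of the groupoid: each `N x` is a
subgroup of the group of loops at `x`, stable under conjugation by arbitrary elements.
(The loop product `m n` corresponds to the composite `n ≫ m`.) -/
structure IsNormalIsotropy {Ω : Type*} [Groupoid Ω] (N : ∀ x : Ω, Set (x ⟶ x)) : Prop where
  one_mem : ∀ x : Ω, 𝟙 x ∈ N x
  mul_mem : ∀ {x : Ω} {m n : x ⟶ x}, m ∈ N x → n ∈ N x → (n ≫ m) ∈ N x
  inv_mem : ∀ {x : Ω} {n : x ⟶ x}, n ∈ N x → Groupoid.inv n ∈ N x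
  conj_mem : ∀ {a b : Ω} (g : a ⟶ b) {n : b ⟶ b}, n ∈ N b → (g ≫ n ≫ Groupoid.inv g) ∈ N a

/-- Characteristic data `(ũ, λ, μ)` for an outer action `(α,w,c)` with respect to a normal
isotropy subgroupoid `N`: unitaries `ũ^x(n)` implementing `α_n` for `n ∈ N_x`, and central
unitaries `λ(n,g)`, `μ(m,n)` with `α_g(ũ^{s(g)}(g⁻¹ng)) = V(n,g)·λ(n,g)·ũ^{r(g)}(n)` and
`ũ^x(m)·ũ^x(n) = μ(m,n)·w(m,n)·ũ^x(mn)`. -/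
structure CharData {Ω : Type*} [Groupoid Ω] {M : Ω → Type*}
    [∀ x, NormedRing (M x)] [∀ x, StarRing (M x)] [∀ x, CStarRing (M x)]
    [∀ x, NormedAlgebra ℂ (M x)] [∀ x, StarModule ℂ (M x)]
    (A : OuterAction Ω M) (N : ∀ x : Ω, Set (x ⟶ x)) where
  u : ∀ {x : Ω}, (x ⟶ x) → M x
  lam : ∀ {a b : Ω}, (b ⟶ b) → (a ⟶ b) → M b
  mu : ∀ {x : Ω}, (x ⟶ x) → (x ⟶ x) → M x
  u_unitary : ∀ {x : Ω} (n : x ⟶ x), n ∈ N x → u n ∈ unitary (M x)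
  u_ad : ∀ {x : Ω} (n : x ⟶ x), n ∈ N x → ∀ m : M x, A.α n m = u n * m * star (u n)
  lam_unitary : ∀ {a b : Ω} (n : b ⟶ b) (g : a ⟶ b), n ∈ N b → lam n g ∈ unitary (M b)
  lam_central : ∀ {a b : Ω} (n : b ⟶ b) (g : a ⟶ b), n ∈ N b →
    ∀ m : M b, lam n g * m = m * lam n g
  mu_unitary : ∀ {x : Ω} (m n : x ⟶ x), m ∈ N x → n ∈ N x → mu m n ∈ unitary (M x)
  mu_central : ∀ {x : Ω} (m n : x ⟶ x), m ∈ N x → n ∈ N x →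
    ∀ a : M x, mu m n * a = a * mu m n
  u_rel : ∀ {a b : Ω} (n : b ⟶ b) (g : a ⟶ b), n ∈ N b →
    A.α g (u (g ≫ n ≫ Groupoid.inv g)) = A.V n g * lam n g * u n
  mul_rel : ∀ {x : Ω} (m n : x ⟶ x), m ∈ N x → n ∈ N x →
    u m * u n = mu m n * A.w m n * u (n ≫ m)

/-- relation (CC3): `μ(l,m)·μ(lm,n) = c(l,m,n)·μ(m,n)·μ(l,mn)` for all
`l, m, n ∈ 𝒩_x`. -/
theorem charData_CC3 {Ω : Type*} [Groupoid Ω] {M : Ω → Type*}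
    [∀ x, NormedRing (M x)] [∀ x, StarRing (M x)] [∀ x, CStarRing (M x)]
    [∀ x, NormedAlgebra ℂ (M x)] [∀ x, StarModule ℂ (M x)]
    (A : OuterAction Ω M)
    (hc : ∀ {a b cc d e : Ω} (g : d ⟶ e) (h : cc ⟶ d) (k : b ⟶ cc) (l : a ⟶ b),
      A.c g h k * conj (A.c g h (l ≫ k)) * A.c g (k ≫ h) l * conj (A.c (h ≫ g) k l) *
        A.c h k l = 1)
    (N : ∀ x : Ω, Set (x ⟶ x)) (hN : IsNormalIsotropy N) (D : CharData A N)
    {x : Ω} (l m n : x ⟶ x) (hl : l ∈ N x) (hm : m ∈ N x) (hn : n ∈ N x) :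
    D.mu l m * D.mu (m ≫ l) n = A.c l m n • (D.mu m n * D.mu l (n ≫ m)) := by
  have hmn := hN.mul_mem hm hn
  have hlm := hN.mul_mem hl hm
  have hlmn := hN.mul_mem hl hmn
  have e1 : D.u l * A.w m n = A.α l (A.w m n) * D.u l := by
    rw [D.u_ad l hl, mul_assoc, Unitary.star_mul_self_of_mem (D.u_unitary l hl), mul_one]
  have h1 : D.u l * D.u m * D.u n = D.mu l m * D.mu (m ≫ l) n *
      (A.w l m * A.w (m ≫ l) n * D.u ((n ≫ m) ≫ l)) := by
    calc D.u l * D.u m * D.u n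
        = D.mu l m * A.w l m * (D.u (m ≫ l) * D.u n) := by
          rw [D.mul_rel l m hl hm, mul_assoc]
      _ = D.mu l m * (A.w l m * D.mu (m ≫ l) n) * A.w (m ≫ l) n * D.u (n ≫ m ≫ l) := by
          rw [D.mul_rel _ n hlm hn]; simp only [mul_assoc]
      _ = _ := by
          rw [← D.mu_central _ n hlm hn, Category.assoc]; simp only [mul_assoc]
  have h2 : D.u l * D.u m * D.u n = (A.c l m n • (D.mu m n * D.mu l (n ≫ m))) *
      (A.w l m * A.w (m ≫ l) n * D.u ((n ≫ m) ≫ l)) := by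
    calc D.u l * D.u m * D.u n
        = (D.u l * D.mu m n) * A.w m n * D.u (n ≫ m) := by
          rw [mul_assoc, D.mul_rel m n hm hn]; simp only [mul_assoc]
      _ = D.mu m n * (D.u l * A.w m n) * D.u (n ≫ m) := by
          rw [← D.mu_central m n hm hn]; simp only [mul_assoc]
      _ = D.mu m n * A.α l (A.w m n) * (D.u l * D.u (n ≫ m)) := by
          rw [e1]; simp only [mul_assoc]
      _ = D.mu m n * (A.α l (A.w m n) * D.mu l (n ≫ m)) * A.w l (n ≫ m) *
            D.u ((n ≫ m) ≫ l) := by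
          rw [D.mul_rel l _ hl hmn]; simp only [mul_assoc]
      _ = D.mu m n * D.mu l (n ≫ m) * (A.α l (A.w m n) * A.w l (n ≫ m)) *
            D.u ((n ≫ m) ≫ l) := by
          rw [← D.mu_central l _ hl hmn]; simp only [mul_assoc]
      _ = _ := by
          rw [A.w_cocycle]; simp only [mul_assoc, smul_mul_assoc, mul_smul_comm]
  have hW : A.w l m * A.w (m ≫ l) n * D.u ((n ≫ m) ≫ l) ∈ unitary (M x) :=
    mul_mem (mul_mem (A.w_unitary _ _) (A.w_unitary _ _)) (D.u_unitary _ hlmn)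
  have h3 := h1.symm.trans h2
  generalize A.w l m * A.w (m ≫ l) n * D.u ((n ≫ m) ≫ l) = W at hW h3
  have h4 := congrArg (· * star W) h3
  simpa only [mul_assoc _ W (star W), Unitary.mul_star_self_of_mem hW, mul_one] using h4
end

section
/- In the setting of an outer action (α,w,c) of a discrete groupoid 𝒢 with a normal isotropy subgroupoid 𝒩 and characteristic data (ũ,λ,μ) as in the context, the relation (CC4) holds: for every composable pair (g,h) in 𝒢 and every n ∈ 𝒩_{r(g)}, λ(n,gh) = α_g(λ(g⁻¹ng,h))·λ(n,g)·conj(c(g,g⁻¹ng,h))·c(n,g,h)·c(g,h,h⁻¹g⁻¹ngh), as an equality of central unitaries in M(r(g)). -/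
open CategoryTheory ComplexConjugate

theorem CC4_aux {R : Type*} [Ring R] [StarRing R] [Algebra ℂ R] [StarModule ℂ R]
    {X Y Z L U W S T P A1 A2 AL L1 B : R} {c1 c2 c3 : ℂ}
    (hX : X ∈ unitary R) (hY : Y ∈ unitary R) (hU : U ∈ unitary R)
    (hW : W ∈ unitary R) (hS : S ∈ unitary R) (hT : T ∈ unitary R) (hP : P ∈ unitary R)
    (hc1 : c1 * conj c1 = 1)
    (cL : ∀ m, L * m = m * L) (cAL : ∀ m, AL * m = m * AL) (cL1 : ∀ m, L1 * m = m * L1)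
    (H : A1 * star A2 * AL * (P * star W * L1 * U) = X * (Y * star Z * L * U) * star X)
    (hB : B = U * X * star U)
    (e1 : B * Z = c1 • (W * S)) (e2 : A1 * T = c2 • (X * Y)) (e3 : A2 * T = c3 • (P * S)) :
    L = (conj c3 * c1 * c2) • (AL * L1) := by
  have f2 : A1 = c2 • (X * Y * star T) := by
    rw [← smul_mul_assoc, ← e2, mul_assoc, Unitary.mul_star_self_of_mem hT, mul_one]
  have f3 : star A2 = conj c3 • (T * star S * star P) := by
    have : A2 = c3 • (P * S * star T) := by
      rw [← smul_mul_assoc, ← e3, mul_assoc, Unitary.mul_star_self_of_mem hT, mul_one]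
    rw [this]; simp [star_smul, mul_assoc]
  have f1 : star Z * star B = conj c1 • (star S * star W) := by
    rw [← star_mul, e1]; simp [star_smul]
  have fU : U * star X = star B * U := by
    rw [hB]; simp [mul_assoc, Unitary.star_mul_self_of_mem hU]
  have hQ : X * Y * star S * star W ∈ unitary R :=
    mul_mem (mul_mem (mul_mem hX hY) (Unitary.star_mem hS)) (Unitary.star_mem hW)
  have l : A1 * star A2 * AL * (P * star W * L1 * U)
      = (c2 * conj c3) • (X * Y * star S * star W * (AL * L1) * U) := by
    calc _ = A1 * star A2 * (AL * (P * star W)) * L1 * U := by simp only [mul_assoc]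
      _ = A1 * star A2 * (P * star W) * (AL * L1) * U := by rw [cAL]; simp only [mul_assoc]
      _ = (c2 * conj c3) • (X * Y * (star T * T) * star S * (star P * P) * star W
            * (AL * L1) * U) := by
          rw [f2, f3]; simp only [mul_assoc, smul_mul_assoc, mul_smul_comm, smul_smul]
          rw [mul_comm c2]
      _ = _ := by
          rw [Unitary.star_mul_self_of_mem hT, Unitary.star_mul_self_of_mem hP, mul_one, mul_one]
  have r : X * (Y * star Z * L * U) * star X
      = conj c1 • (X * Y * star S * star W * L * U) := by
    calc _ = X * Y * star Z * (L * (U * star X)) := by simp only [mul_assoc]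
      _ = X * Y * star Z * (L * star B * U) := by rw [fU]; simp only [mul_assoc]
      _ = X * Y * (star Z * star B) * L * U := by rw [cL]; simp only [mul_assoc]
      _ = _ := by rw [f1]; simp only [mul_assoc, smul_mul_assoc, mul_smul_comm]
  rw [l, r] at H
  generalize X * Y * star S * star W = Q at H hQ
  have H2 := congrArg (fun z => c1 • (star Q * z * star U)) H
  have k : ∀ z, star Q * (Q * z * U) * star U = z := fun z => by
    calc _ = (star Q * Q) * z * (U * star U) := by simp only [mul_assoc]
      _ = z := by rw [Unitary.star_mul_self_of_mem hQ, Unitary.mul_star_self_of_mem hU]; simp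
  simp only [mul_smul_comm, smul_mul_assoc, k, smul_smul, hc1, one_smul] at H2
  rw [← H2]; congr 1; ring

/-- relation (CC4): for a composable pair `(g,h)` and `n ∈ 𝒩_{r(g)}`:
`λ(n,gh) = α_g(λ(g⁻¹ng,h))·λ(n,g)·conj(c(g,g⁻¹ng,h))·c(n,g,h)·c(g,h,h⁻¹g⁻¹ngh)`. -/
theorem charData_CC4 {Ω : Type*} [Groupoid Ω] {M : Ω → Type*}
    [∀ x, NormedRing (M x)] [∀ x, StarRing (M x)] [∀ x, CStarRing (M x)]
    [∀ x, NormedAlgebra ℂ (M x)] [∀ x, StarModule ℂ (M x)]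
    (A : OuterAction Ω M)
    (hc : ∀ {a b cc d e : Ω} (g : d ⟶ e) (h : cc ⟶ d) (k : b ⟶ cc) (l : a ⟶ b),
      A.c g h k * conj (A.c g h (l ≫ k)) * A.c g (k ≫ h) l * conj (A.c (h ≫ g) k l) *
        A.c h k l = 1)
    (N : ∀ x : Ω, Set (x ⟶ x)) (hN : IsNormalIsotropy N) (D : CharData A N)
    {a b cc : Ω} (h : a ⟶ b) (g : b ⟶ cc) (n : cc ⟶ cc) (hn : n ∈ N cc) :
    D.lam n (h ≫ g) =
      (conj (A.c g (g ≫ n ≫ Groupoid.inv g) h) * A.c n g h *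
          A.c g h ((h ≫ g) ≫ n ≫ Groupoid.inv (h ≫ g))) •
        (A.α g (D.lam (g ≫ n ≫ Groupoid.inv g) h) * D.lam n g) := by
  have hp := hN.conj_mem g hn
  have eq1 : (h ≫ g) ≫ n ≫ Groupoid.inv (h ≫ g)
      = h ≫ (g ≫ n ≫ Groupoid.inv g) ≫ Groupoid.inv h := by
    simp [Groupoid.inv_eq_inv]
  have rel := D.u_rel n (h ≫ g) hn
  have relg := D.u_rel n g hn
  have relh := D.u_rel _ h hp
  have epg : (g ≫ n ≫ Groupoid.inv g) ≫ g = g ≫ n := by simp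
  rw [OuterAction.V] at rel relg relh
  rw [eq1] at rel ⊢
  generalize g ≫ n ≫ Groupoid.inv g = p at *
  have eqh : (h ≫ p ≫ Groupoid.inv h) ≫ h = h ≫ p := by simp
  generalize h ≫ p ≫ Groupoid.inv h = q at *
  have H := A.α_comp g h (D.u q)
  rw [relh, rel, map_mul, map_mul, map_mul, map_star, relg] at H
  have e1 := A.w_cocycle n g h
  have e2 := A.w_cocycle g h q
  have e3 := A.w_cocycle g p h
  rw [eqh] at e2
  rw [epg] at e3
  refine CC4_aux (A.w_unitary g h) (A.w_unitary (h ≫ g) q) (D.u_unitary n hn)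
    (A.w_unitary n g) (A.w_unitary (g ≫ n) h) (A.w_unitary g (h ≫ p)) (A.w_unitary g p) ?_
    (D.lam_central _ _ hn) ?_ (D.lam_central _ _ hn) H (D.u_ad n hn _) e1 e2 e3
  · rw [Complex.mul_conj, Complex.normSq_eq_norm_sq, A.c_abs]; simp
  · intro m
    obtain ⟨m, rfl⟩ := EquivLike.surjective (A.α g) m
    rw [← map_mul, D.lam_central _ _ hp, map_mul]
end

section
/- In the setting of an outer action (α,w,c) of a discrete groupoid 𝒢 with a normal isotropy subgroupoid 𝒩 and characteristic data (ũ,λ,μ) as in the context, the relation (CC6) holds: for every unit x and all m,n ∈ 𝒩_x, λ(n,m) = μ(m,m⁻¹nm)·μ(n,m)*, as an equality of central unitaries in M(x). -/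
open CategoryTheory ComplexConjugate

/-- relation (CC6): `λ(n,m) = μ(m,m⁻¹nm)·μ(n,m)*` for all `m, n ∈ 𝒩_x`. -/
theorem charData_CC6 {Ω : Type*} [Groupoid Ω] {M : Ω → Type*}
    [∀ x, NormedRing (M x)] [∀ x, StarRing (M x)] [∀ x, CStarRing (M x)]
    [∀ x, NormedAlgebra ℂ (M x)] [∀ x, StarModule ℂ (M x)]
    (A : OuterAction Ω M)
    (N : ∀ x : Ω, Set (x ⟶ x)) (hN : IsNormalIsotropy N) (D : CharData A N)
    {x : Ω} (m n : x ⟶ x) (hm : m ∈ N x) (hn : n ∈ N x) :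
    D.lam n m = D.mu m (m ≫ n ≫ Groupoid.inv m) * star (D.mu n m) := by
  have hk := hN.conj_mem m hn
  have hT := hN.mul_mem hn hm
  have h1 := D.u_rel n m hn
  rw [D.u_ad m hm] at h1
  have h2 := D.mul_rel m _ hm hk
  have h3 := D.mul_rel n m hn hm
  have e : (m ≫ n ≫ Groupoid.inv m) ≫ m = m ≫ n := by simp
  rw [e] at h2
  unfold OuterAction.V at h1
  have hU := (Unitary.mem_iff.1 (D.u_unitary m hm)).1
  have hTT := (Unitary.mem_iff.1 (D.u_unitary _ hT)).2
  have ha := (Unitary.mem_iff.1 (A.w_unitary m (m ≫ n ≫ Groupoid.inv m))).2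
  have hb := (Unitary.mem_iff.1 (A.w_unitary n m)).1
  have hQ := (Unitary.mem_iff.1 (D.mu_unitary n m hn hm)).2
  have hLc := D.lam_central n m hn
  have hQc := D.mu_central n m hn hm
  generalize D.u (m ≫ n ≫ Groupoid.inv m) = K at *
  generalize D.u (m ≫ n) = T at *
  generalize D.mu m (m ≫ n ≫ Groupoid.inv m) = P at *
  generalize A.w m (m ≫ n ≫ Groupoid.inv m) = a at *
  generalize A.w n m = b at *
  generalize D.mu n m = Q at *
  generalize D.lam n m = L at *
  generalize D.u m = U at *
  generalize D.u n = S at *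
  have h4 : L * Q * a * T = P * a * T := by
    calc L * Q * a * T = L * Q * a * (star b * b) * T := by rw [hb, mul_one]
      _ = L * (Q * (a * star b)) * b * T := by simp only [mul_assoc]
      _ = L * ((a * star b) * Q) * b * T := by rw [hQc]
      _ = (L * (a * star b)) * (Q * b * T) := by simp only [mul_assoc]
      _ = (a * star b * L * S) * U := by rw [hLc, ← h3]; simp only [mul_assoc]
      _ = U * K * (star U * U) := by rw [← h1]; simp only [mul_assoc]
      _ = P * a * T := by rw [hU, mul_one, h2]
  have h5 : L * Q = P := by
    have h := congrArg (fun z => z * star T * star a) h4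
    simpa only [mul_assoc, hTT, ha, mul_one] using h
  rw [← h5, mul_assoc, hQ, mul_one]
end

section
/- In the group setting of the context (cocycle crossed action (α,w,c) of G on M, normal subgroup N with quotient Q = G/N, section p ↦ s_p, characteristic data (ũ,λ,μ), and the normalization formula for w), for all p,q,r ∈ Q: d₁(p,q,r) = c(s_p,s_q,s_r)·δ[λ,μ](p,q,r), where d₁(p,q,r) := α_{s_p}(z(q,r))·z(p,qr)·z(pq,r)*·z(p,q)*, z(p,q) := w(s_p,s_q)·ũ_{𝔫(p,q)}, and δ[λ,μ](p,q,r) := λ(s_p·𝔫(q,r)·s_p⁻¹, s_p)·μ(s_p·𝔫(q,r)·s_p⁻¹, 𝔫(p,qr))·μ(𝔫(p,q),𝔫(pq,r))*. -/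
open ComplexConjugate

/-- A cocycle crossed action `(α, w, c)` of a discrete group `G` on a unital C*-algebra `M`:
unital *-automorphisms `α_g`, unitaries `w(g,h)`, and modulus-one scalars `c(g,h,k)` with
`α_g ∘ α_h = Ad(w(g,h)) ∘ α_{gh}`, `α_g(w(h,k))·w(g,hk) = c(g,h,k)·w(g,h)·w(gh,k)`,
`w(g,h) = 1` when `g = e` or `h = e`, and `c(g,h,k) = 1` when one of `g,h,k` equals `e`. -/
structure CocycleCrossed (G : Type*) [Group G] (M : Type*) [NormedRing M] [StarRing M]
    [CStarRing M] [NormedAlgebra ℂ M] [StarModule ℂ M] where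
  α : G → (M ≃⋆ₐ[ℂ] M)
  w : G → G → M
  c : G → G → G → ℂ
  w_unitary : ∀ g h, w g h ∈ unitary M
  c_abs : ∀ g h k, ‖c g h k‖ = 1
  α_comp : ∀ g h (m : M), α g (α h m) = w g h * α (g * h) m * star (w g h)
  w_cocycle : ∀ g h k, α g (w h k) * w g (h * k) = c g h k • (w g h * w (g * h) k)
  w_one_left : ∀ h, w 1 h = 1
  w_one_right : ∀ g, w g 1 = 1
  c_one₁ : ∀ h k, c 1 h k = 1
  c_one₂ : ∀ g k, c g 1 k = 1
  c_one₃ : ∀ g h, c g h 1 = 1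

/-- Characteristic data `(ũ, λ, μ)` for a cocycle crossed action with respect to a normal
subgroup `N`: unitaries `ũ_n` implementing `α_n` for `n ∈ N` with `ũ_e = 1`, and central
unitaries `λ(n,g)`, `μ(m,n)` with `α_g(ũ_{g⁻¹ng}) = V(n,g)·λ(n,g)·ũ_n` and
`ũ_m·ũ_n = μ(m,n)·w(m,n)·ũ_{mn}`, where `V(n,g) = w(g,g⁻¹ng)·w(n,g)*`. -/
structure GroupCharData {G : Type*} [Group G] {M : Type*} [NormedRing M] [StarRing M]
    [CStarRing M] [NormedAlgebra ℂ M] [StarModule ℂ M]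
    (A : CocycleCrossed G M) (N : Subgroup G) where
  u : G → M
  lam : G → G → M
  mu : G → G → M
  u_one : u 1 = 1
  u_unitary : ∀ n ∈ N, u n ∈ unitary M
  u_ad : ∀ n ∈ N, ∀ m : M, A.α n m = u n * m * star (u n)
  lam_unitary : ∀ n ∈ N, ∀ g : G, lam n g ∈ unitary M
  lam_central : ∀ n ∈ N, ∀ (g : G) (m : M), lam n g * m = m * lam n g
  mu_unitary : ∀ m ∈ N, ∀ n ∈ N, mu m n ∈ unitary M
  mu_central : ∀ m ∈ N, ∀ n ∈ N, ∀ a : M, mu m n * a = a * mu m n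
  u_rel : ∀ n ∈ N, ∀ g : G,
    A.α g (u (g⁻¹ * n * g)) = (A.w g (g⁻¹ * n * g) * star (A.w n g)) * lam n g * u n
  mul_rel : ∀ m ∈ N, ∀ n ∈ N, u m * u n = mu m n * A.w m n * u (m * n)

variable {G : Type*} [Group G] {M : Type*} [NormedRing M] [StarRing M]
  [CStarRing M] [NormedAlgebra ℂ M] [StarModule ℂ M]

/-- `𝔫(p,q) = s_p·s_q·s_{pq}⁻¹` for a section `sec` of the quotient map `G → G/N`. -/
def nElt (N : Subgroup G) [N.Normal] (sec : G ⧸ N → G) (p q : G ⧸ N) : G :=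
  sec p * sec q * (sec (p * q))⁻¹

/-- `z(p,q) = w(s_p,s_q)·ũ_{𝔫(p,q)}`. -/
def zMap {N : Subgroup G} [N.Normal] (A : CocycleCrossed G M) (D : GroupCharData A N)
    (sec : G ⧸ N → G) (p q : G ⧸ N) : M :=
  A.w (sec p) (sec q) * D.u (nElt N sec p q)

/-- `d₁(p,q,r) = α_{s_p}(z(q,r))·z(p,qr)·z(pq,r)*·z(p,q)*`. -/
def dOne {N : Subgroup G} [N.Normal] (A : CocycleCrossed G M) (D : GroupCharData A N)
    (sec : G ⧸ N → G) (p q r : G ⧸ N) : M :=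
  A.α (sec p) (zMap A D sec q r) * zMap A D sec p (q * r) *
    star (zMap A D sec (p * q) r) * star (zMap A D sec p q)

/-- `δ[λ,μ](p,q,r) = λ(s_p·𝔫(q,r)·s_p⁻¹, s_p)·μ(s_p·𝔫(q,r)·s_p⁻¹, 𝔫(p,qr))·μ(𝔫(p,q),𝔫(pq,r))*`. -/
def deltaLM {N : Subgroup G} [N.Normal] (A : CocycleCrossed G M) (D : GroupCharData A N)
    (sec : G ⧸ N → G) (p q r : G ⧸ N) : M :=
  D.lam (sec p * nElt N sec q r * (sec p)⁻¹) (sec p) *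
    D.mu (sec p * nElt N sec q r * (sec p)⁻¹) (nElt N sec p (q * r)) *
    star (D.mu (nElt N sec p q) (nElt N sec (p * q) r))

/-- `d₁(p,q,r) = c(s_p,s_q,s_r)·δ[λ,μ](p,q,r)` for all `p, q, r ∈ Q = G/N`,
given the normalization formula for `w`. -/
theorem dOne_eq_c_mul_delta (N : Subgroup G) [N.Normal]
    (A : CocycleCrossed G M) (D : GroupCharData A N)
    (sec : G ⧸ N → G) (hsec : ∀ p : G ⧸ N, QuotientGroup.mk (sec p) = p)
    (sec_one : sec 1 = 1)
    (hw : ∀ m ∈ N, ∀ n ∈ N, ∀ p q : G ⧸ N,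
      A.w (m * sec p) (n * sec q) =
        A.α m (A.w (sec p) n) *
          A.α (m * (sec p * n * (sec p)⁻¹)) (A.w (sec p) (sec q)) *
          A.w m (sec p * n * (sec p)⁻¹) *
          A.w (m * (sec p * n * (sec p)⁻¹)) (nElt N sec p q))
    (p q r : G ⧸ N) :
    dOne A D sec p q r = A.c (sec p) (sec q) (sec r) • deltaLM A D sec p q r := by
  have α1 : ∀ x, A.α 1 x = x := by
    intro x
    have h := A.α_comp 1 1 x
    rw [A.w_one_left, mul_one, one_mul, star_one, mul_one] at h
    exact (A.α 1).injective h
  have nmem : ∀ p q, nElt N sec p q ∈ N := by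
    intro p q
    rw [← QuotientGroup.eq_one_iff]
    simp [nElt, hsec]
  have cmem : ∀ n ∈ N, ∀ g : G, g * n * g⁻¹ ∈ N := fun n hn g =>
    Subgroup.Normal.conj_mem inferInstance n hn g
  have n1 : ∀ q, nElt N sec 1 q = 1 := by
    intro q; simp [nElt, sec_one]
  have w1 : ∀ m ∈ N, ∀ q, A.w m (sec q) = 1 := by
    intro m hm q
    have h := hw m hm 1 N.one_mem 1 q
    simpa [sec_one, n1, A.w_one_left, A.w_one_right] using h
  have w2 : ∀ n ∈ N, ∀ p q, A.w (sec p) (n * sec q) = A.w (sec p) n *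
      A.α (sec p * n * (sec p)⁻¹) (A.w (sec p) (sec q)) *
      A.w (sec p * n * (sec p)⁻¹) (nElt N sec p q) := by
    intro n hn p q
    have h := hw 1 N.one_mem n hn p q
    simpa only [one_mul, α1, A.w_one_left, mul_one] using h
  have w3 : ∀ m ∈ N, ∀ p q, A.w (m * sec p) (sec q) =
      A.α m (A.w (sec p) (sec q)) * A.w m (nElt N sec p q) := by
    intro m hm p q
    have h := hw m hm 1 N.one_mem p q
    simpa only [one_mul, A.w_one_right, mul_one, map_one, mul_inv_cancel] using h
  have comm : ∀ n ∈ N, ∀ x, D.u n * x = A.α n x * D.u n := by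
    intro n hn x
    rw [D.u_ad n hn, mul_assoc, (Unitary.mem_iff.mp (D.u_unitary n hn)).1, mul_one]
  have zz : ∀ m ∈ N, ∀ n ∈ N, ∀ x, D.u m * (x * D.u n) =
      D.mu m n * (A.α m x * A.w m n * D.u (m * n)) := by
    intro m hm n hn x
    rw [← mul_assoc, comm m hm, mul_assoc, D.mul_rel m hm n hn]
    rw [mul_assoc (D.mu m n), ← mul_assoc (A.α m x), ← D.mu_central m hm n hn]
    simp only [mul_assoc]
  have zu : ∀ p q, zMap A D sec p q ∈ unitary M := fun p q =>
    mul_mem (A.w_unitary _ _) (D.u_unitary _ (nmem p q))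
  have hn' := cmem _ (nmem q r) (sec p)
  have e1 : nElt N sec q r * sec (q * r) = sec q * sec r := by simp [nElt]
  have e2 : nElt N sec p q * sec (p * q) = sec p * sec q := by simp [nElt]
  have e3 : sec p * nElt N sec q r * (sec p)⁻¹ * nElt N sec p (q * r) =
      nElt N sec p q * nElt N sec (p * q) r := by
    simp [nElt, mul_assoc]
  have au : A.α (sec p) (D.u (nElt N sec q r)) =
      D.lam (sec p * nElt N sec q r * (sec p)⁻¹) (sec p) *
      (A.w (sec p) (nElt N sec q r) * D.u (sec p * nElt N sec q r * (sec p)⁻¹)) := by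
    have h := D.u_rel _ hn' (sec p)
    have e : (sec p)⁻¹ * (sec p * nElt N sec q r * (sec p)⁻¹) * sec p = nElt N sec q r := by
      group
    rw [e, w1 _ hn', star_one, mul_one, ← D.lam_central _ hn', mul_assoc] at h
    exact h
  have w2' := w2 _ (nmem q r) p (q * r)
  have w3' := w3 _ (nmem p q) (p * q) r
  rw [e1] at w2'
  rw [e2] at w3'
  have coc := A.w_cocycle (sec p) (sec q) (sec r)
  have lc := D.lam_central _ hn' (sec p)
  have mc := D.mu_central _ hn' _ (nmem p (q * r))
  have mc' := D.mu_central _ (nmem p q) _ (nmem (p * q) r)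
  have mu' := D.mu_unitary _ (nmem p q) _ (nmem (p * q) r)
  have X1 := zz _ hn' _ (nmem p (q * r)) (A.w (sec p) (sec (q * r)))
  have Y1 := zz _ (nmem p q) _ (nmem (p * q) r) (A.w (sec (p * q)) (sec r))
  rw [e3] at X1
  rw [← w3'] at Y1
  have zu1 := zu p q
  have zu2 := zu (p * q) r
  unfold deltaLM dOne
  have Y : zMap A D sec p q * zMap A D sec (p * q) r =
      D.mu (nElt N sec p q) (nElt N sec (p * q) r) *
      (A.w (sec p) (sec q) * A.w (sec p * sec q) (sec r) *
        D.u (nElt N sec p q * nElt N sec (p * q) r)) := by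
    unfold zMap
    rw [mul_assoc, Y1, ← mul_assoc (A.w (sec p) (sec q)), ← mc']
    simp only [mul_assoc]
  have X : A.α (sec p) (zMap A D sec q r) * zMap A D sec p (q * r) =
      A.c (sec p) (sec q) (sec r) • (D.lam (sec p * nElt N sec q r * (sec p)⁻¹) (sec p) *
      D.mu (sec p * nElt N sec q r * (sec p)⁻¹) (nElt N sec p (q * r)) *
      (A.w (sec p) (sec q) * A.w (sec p * sec q) (sec r) *
        D.u (nElt N sec p q * nElt N sec (p * q) r))) := by
    unfold zMap
    rw [map_mul, au]
    generalize D.lam _ _ = l at *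
    calc _ = A.α (sec p) (A.w (sec q) (sec r)) * l * A.w (sec p) (nElt N sec q r) *
          (D.u (sec p * nElt N sec q r * (sec p)⁻¹) * (A.w (sec p) (sec (q * r)) *
            D.u (nElt N sec p (q * r)))) := by simp only [mul_assoc]
      _ = _ := by
        rw [X1, ← lc, ← mul_assoc _ (D.mu _ _), ← mc]
        generalize D.mu _ _ = k at *
        have : ∀ a b c d : M, k * (l * a * b) * (c * d) = l * k * (a * (b * c) * d) := by
          intro a b c d
          rw [← mul_assoc k, ← mul_assoc k, ← lc k]; simp only [mul_assoc]
        rw [this, ← mul_assoc (A.w (sec p) (nElt N sec q r)), ← w2', coc]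
        simp only [smul_mul_assoc, mul_smul_comm]
  generalize D.mu (nElt N sec p q) (nElt N sec (p * q) r) = k at *
  generalize D.lam _ _ * D.mu _ _ = l at *
  have mk := (Unitary.mem_iff.mp mu').1
  have W : A.w (sec p) (sec q) * A.w (sec p * sec q) (sec r) *
        D.u (nElt N sec p q * nElt N sec (p * q) r) =
      star k * (zMap A D sec p q * zMap A D sec (p * q) r) := by
    rw [Y, ← mul_assoc, mk, one_mul]
  rw [X, W, mul_assoc, ← star_mul, smul_mul_assoc]
  have := (Unitary.mem_iff.mp (mul_mem zu1 zu2)).2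
  rw [← mul_assoc l, mul_assoc (l * star k), this, mul_one]
end
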